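/- There is no nonnegative decimal (m, a) with truncation sequence t such that for every k : ℕ there exists N with ⌊10^k·(t n)²⌋ = 2·10^k for all n ≥ N. (In other words, the squares of the truncations of a decimal never formally converge to the terminating decimal 2.000…, so the equation x² = 2 has no solution among infinite decimals with multiplication defined by formal limits; since the truncations of a decimal and of its negative have equal squares, the nonnegative case covers all decimals.) -/

import Mathlib

/-!
The truncations `t n` are rational and nondecreasing in `n`. If the squares formally converged to
`2.000…`, then for large `n` one would have `2 ≤ (t n)²`, hence `2 < (t n)²` because `√2` is
irrational. That gap persists by monotonicity, and it exceeds `10⁻ᵏ` for some `k`, so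
`10ᵏ (t n)² ≥ 2·10ᵏ + 1` for all large `n`, against the formal convergence at precision `k`.
-/

/-- The `n`-truncation of the nonnegative decimal `(m, a)`. -/
def trunc (m : ℕ) (a : ℕ → Fin 10) (n : ℕ) : ℚ :=
  m + ∑ i ∈ Finset.range n, (a i : ℚ) / 10 ^ (i + 1)

lemma trunc_nonneg (m : ℕ) (a : ℕ → Fin 10) (n : ℕ) : 0 ≤ trunc m a n := by
  unfold trunc
  positivity

lemma trunc_mono (m : ℕ) (a : ℕ → Fin 10) : Monotone (trunc m a) := by
  refine monotone_nat_of_le_succ fun n => ?_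
  unfold trunc
  rw [Finset.sum_range_succ, ← add_assoc]
  exact le_add_of_nonneg_right (by positivity)

lemma rat_sq_ne_two (q : ℚ) : q ^ 2 ≠ 2 := by
  intro h
  have hsq : IsSquare (2 : ℚ) := ⟨q, by rw [← h, sq]⟩
  have h2 : Irrational (√((2 : ℚ) : ℝ)) := by simpa using irrational_sqrt_two
  exact (irrational_sqrt_ratCast_iff.mp h2).1 hsq

/-- The squares of the truncations of a nonnegative decimal never formally converge to
the terminating decimal `2.000…`: the equation `x² = 2` has no solution among infinite
decimals with multiplication defined by formal limits. -/
theorem no_decimal_sq_eq_two :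
    ¬ ∃ (m : ℕ) (a : ℕ → Fin 10),
        ∀ k : ℕ, ∃ N : ℕ, ∀ n ≥ N,
          ⌊(10 : ℚ) ^ k * (trunc m a n) ^ 2⌋ = 2 * 10 ^ k := by
  rintro ⟨m, a, h⟩
  obtain ⟨N₀, hN₀⟩ := h 0
  have hge : (2 : ℚ) ≤ trunc m a N₀ ^ 2 := by
    have := Int.floor_le ((10 : ℚ) ^ 0 * trunc m a N₀ ^ 2)
    rw [hN₀ N₀ le_rfl] at this
    simpa using this
  have hgt : (2 : ℚ) < trunc m a N₀ ^ 2 := lt_of_le_of_ne hge (rat_sq_ne_two _).symm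
  obtain ⟨k, hk⟩ := pow_unbounded_of_one_lt (1 / (trunc m a N₀ ^ 2 - 2))
    (by norm_num : (1 : ℚ) < 10)
  rw [div_lt_iff₀ (sub_pos.mpr hgt)] at hk
  obtain ⟨N, hN⟩ := h k
  have hlt := Int.lt_floor_add_one ((10 : ℚ) ^ k * trunc m a (max N N₀) ^ 2)
  rw [hN _ (le_max_left _ _)] at hlt
  push_cast at hlt
  have hsq : trunc m a N₀ ^ 2 ≤ trunc m a (max N N₀) ^ 2 :=
    pow_le_pow_left₀ (trunc_nonneg m a N₀) (trunc_mono m a (le_max_right _ _)) 2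
  have hmul := mul_le_mul_of_nonneg_left hsq (by positivity : (0 : ℚ) ≤ 10 ^ k)
  linarith
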